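/- Let n ≥ 2, let X be any n×n complex matrix, and let r ∈ [0,n−1]. Then for all t, s ∈ ℂ, the coefficient of λ^r in the polynomial λ ↦ det(λ·A(X') + B(X')), where X' = t^{D_n} X s^{D̄_n}, equals t^w s^w times the coefficient of λ^r in λ ↦ det(λ·A(X) + B(X)), where w = n(n+3)/2 − r. -/

import Mathlib

/-!
Write `M(λ) = λ A(X) + B(X)` and `M'(λ) = λ A(X') + B(X')` with `X' = t^{D_n} X s^{D̄_n}`, `n = m+1`,
rows and columns being numbered from `0`. Substituting `t s λ` for `λ` in `M'` turns the two
gradings of the `A`-part and the `B`-part into the same one: up to a factor `t` in column `0`,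
the entry `(i, j)` of `M'(t s λ)` is `t^(m+2-i) * v j` times that of `M(λ)`, where `v 0 = s^(m+1)`
and `v j = s^j` for `j ≥ 1` (`entry_scaling`). Taking determinants gives
`t * det M'(t s λ) = t^(W+1) s^W det M(λ)` with `W = n(n+3)/2` (`charAB_comp`).
Comparing coefficients of `λ^r` and cancelling `t (t s)^r` proves the claim when `t s ≠ 0`.
If `t s = 0`, then `X' = 0` and both sides vanish, since `r < W`.
-/

open Matrix

noncomputable section

/-- Entry of a matrix addressed with natural-number indices (0 out of range). -/
def ent {N M : ℕ} (A : Matrix (Fin N) (Fin M) ℂ) (i j : ℕ) : ℂ :=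
  if h : i < N ∧ j < M then A ⟨i, h.1⟩ ⟨j, h.2⟩ else 0

/-- The matrix `A(X)` (paper's `n = m+1`). -/
def matA {m : ℕ} (X : Matrix (Fin (m+1)) (Fin (m+1)) ℂ) : Matrix (Fin (m+2)) (Fin (m+2)) ℂ :=
  Matrix.of fun i j => if (i:ℕ) < m+1 ∧ 2 ≤ (j:ℕ) then ent X (i:ℕ) ((j:ℕ)-2) else 0

/-- The matrix `B(X)` (paper's `n = m+1`). -/
def matB {m : ℕ} (X : Matrix (Fin (m+1)) (Fin (m+1)) ℂ) : Matrix (Fin (m+2)) (Fin (m+2)) ℂ :=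
  Matrix.of fun i j =>
    if (j:ℕ) = 0 then (if (i:ℕ) < m+1 then ent X (i:ℕ) m else 0)
    else if 1 ≤ (i:ℕ) then ent X ((i:ℕ)-1) ((j:ℕ)-1) else 0

/-- The polynomial `λ ↦ det (λ A(X) + B(X))`. -/
def charAB {m : ℕ} (X : Matrix (Fin (m+1)) (Fin (m+1)) ℂ) : Polynomial ℂ :=
  Matrix.det (Matrix.of fun i j =>
    Polynomial.X * Polynomial.C (matA X i j) + Polynomial.C (matB X i j))

/-- `t^{D_n} = diag(t^n, t^{n-1}, …, t)` with `n = m+1`. -/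
def tD {m : ℕ} (t : ℂ) : Matrix (Fin (m+1)) (Fin (m+1)) ℂ :=
  Matrix.diagonal fun i => t ^ (m+1 - (i:ℕ))

/-- `s^{D̄_n} = diag(s, s², …, s^n)` with `n = m+1`. -/
def sD {m : ℕ} (s : ℂ) : Matrix (Fin (m+1)) (Fin (m+1)) ℂ :=
  Matrix.diagonal fun i => s ^ ((i:ℕ) + 1)

lemma ent_scaled {m : ℕ} (X : Matrix (Fin (m+1)) (Fin (m+1)) ℂ) (t s : ℂ) (i j : ℕ) :
    ent (tD t * X * sD s) i j = t ^ (m+1-i) * s ^ (j+1) * ent X i j := by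
  unfold ent
  split_ifs with h
  · simp only [tD, sD, Matrix.mul_diagonal, Matrix.diagonal_mul]
    ring
  · simp

lemma two_mul_sum_sub (k : ℕ) : 2 * ∑ i : Fin k, (k - (i:ℕ)) = k * (k+1) := by
  induction k with
  | zero => simp
  | succ k ih =>
    rw [Fin.sum_univ_succ]
    simp only [Fin.val_zero, Fin.val_succ, Nat.add_sub_add_right, mul_add, ih]
    simp only [Nat.sub_zero]
    ring

lemma two_mul_sum_succ (k : ℕ) : 2 * ∑ i : Fin k, ((i:ℕ) + 1) = k * (k+1) := by
  induction k with
  | zero => simp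
  | succ k ih =>
    rw [Fin.sum_univ_castSucc]
    simp only [Fin.val_castSucc, Fin.val_last, mul_add] at ih ⊢
    rw [ih]
    ring

/-- The factor by which column `j` scales with respect to `s`; column `0` of `B(X)` is the last
column of `X`, hence its exponent `m+1`. -/
def colWeight (m : ℕ) (s : ℂ) (j : Fin (m+2)) : ℂ :=
  if (j:ℕ) = 0 then s ^ (m+1) else s ^ (j:ℕ)

/-- The correction factor `t` for column `0`, which has one power of `t` less than the others. -/
def colFix (m : ℕ) (t : ℂ) (j : Fin (m+2)) : ℂ :=
  if (j:ℕ) = 0 then t else 1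

lemma prod_colFix (m : ℕ) (t : ℂ) : ∏ j, colFix m t j = t := by
  rw [Fin.prod_univ_succ]
  simp [colFix]

lemma prod_colWeight (m : ℕ) (s : ℂ) : ∏ j, colWeight m s j = s ^ ((m+1)*(m+4)/2) := by
  rw [Fin.prod_univ_succ]
  simp only [colWeight, Fin.val_zero, Fin.val_succ, if_true, Nat.succ_ne_zero, if_false]
  rw [Finset.prod_pow_eq_pow_sum, ← pow_add]
  congr 1
  have h := two_mul_sum_succ (m+1)
  have h2 : (m+1)*(m+4) = 2*(m+1) + (m+1)*(m+1+1) := by ring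
  omega

lemma prod_rowWeight (m : ℕ) (t : ℂ) :
    ∏ i : Fin (m+2), t ^ (m+2-(i:ℕ)) = t ^ ((m+1)*(m+4)/2) * t := by
  rw [Finset.prod_pow_eq_pow_sum, ← pow_succ]
  congr 1
  have h := two_mul_sum_sub (m+2)
  have h2 : (m+2)*(m+2+1) = (m+1)*(m+4) + 2 := by ring
  omega

/-- The two parts of the pencil, with `λ` replaced by `t s λ`, scale by a common factor that
splits into a row factor and a column factor. -/
lemma entry_scaling {m : ℕ} (X : Matrix (Fin (m+1)) (Fin (m+1)) ℂ) (t s : ℂ) (i j : Fin (m+2)) :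
    colFix m t j * (t * s * matA (tD t * X * sD s) i j)
        = t ^ (m+2-(i:ℕ)) * (colWeight m s j * matA X i j) ∧
    colFix m t j * matB (tD t * X * sD s) i j
        = t ^ (m+2-(i:ℕ)) * (colWeight m s j * matB X i j) := by
  simp only [matA, matB, Matrix.of_apply, ent_scaled, colFix, colWeight]
  have hi := i.isLt
  constructor
  · by_cases h : (i:ℕ) < m+1 ∧ 2 ≤ (j:ℕ)
    · have hj : (j:ℕ) ≠ 0 := by omega
      obtain ⟨k, hk⟩ : ∃ k, (j:ℕ) = k + 2 := ⟨(j:ℕ) - 2, by omega⟩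
      have e : m+2-(i:ℕ) = (m+1-(i:ℕ)) + 1 := by omega
      simp only [h, hj, and_self, if_true, if_false, e]
      rw [hk, Nat.add_sub_cancel]
      ring
    · rw [if_neg h, if_neg h]
      simp
  · by_cases hj : (j:ℕ) = 0
    · simp only [hj, if_true]
      split_ifs with h
      · have e : m+2-(i:ℕ) = (m+1-(i:ℕ)) + 1 := by omega
        rw [e]
        ring
      · simp
    · simp only [hj, if_false]
      split_ifs with h
      · have e : m+1-((i:ℕ)-1) = m+2-(i:ℕ) := by omega
        have e2 : (j:ℕ)-1+1 = (j:ℕ) := by omega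
        rw [e, e2]
        ring
      · simp

open Polynomial in
lemma charAB_comp {m : ℕ} (X : Matrix (Fin (m+1)) (Fin (m+1)) ℂ) (t s : ℂ) :
    C t * (charAB (tD t * X * sD s)).comp (C (t * s) * Polynomial.X)
      = C (t ^ ((m+1)*(m+4)/2) * t) * (C (s ^ ((m+1)*(m+4)/2)) * charAB X) := by
  rw [← prod_rowWeight, ← prod_colWeight, map_prod, map_prod]
  nth_rewrite 1 [← prod_colFix m t]
  rw [map_prod, charAB, charAB, ← Polynomial.coe_compRingHom_apply, RingHom.map_det,
    ← Matrix.det_mul_row, ← Matrix.det_mul_row, ← Matrix.det_mul_column]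
  congr 1
  ext1 i j
  obtain ⟨hA, hB⟩ := entry_scaling X t s i j
  have hA' := congrArg (C : ℂ → ℂ[X]) hA
  have hB' := congrArg (C : ℂ → ℂ[X]) hB
  simp only [Matrix.of_apply, RingHom.mapMatrix_apply, Matrix.map_apply,
    Polynomial.coe_compRingHom_apply, add_comp, mul_comp, X_comp, C_comp, C_mul] at hA' hB' ⊢
  linear_combination Polynomial.X * hA' + hB'

lemma charAB_zero (m : ℕ) : charAB (0 : Matrix (Fin (m+1)) (Fin (m+1)) ℂ) = 0 := by
  unfold charAB
  apply Matrix.det_eq_zero_of_row_eq_zero 0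
  intro j
  simp [matA, matB, ent]

/-- for `n = m+1 ≥ 2` and `r ∈ [0, n-1]`, the coefficient of `λ^r` in
`det (λ A(X') + B(X'))`, where `X' = t^{D_n} X s^{D̄_n}`, equals `t^w s^w` times the coefficient
of `λ^r` in `det (λ A(X) + B(X))`, with `w = n(n+3)/2 - r`. -/
theorem charAB_homogeneity (m : ℕ) (hm : 1 ≤ m) (X : Matrix (Fin (m+1)) (Fin (m+1)) ℂ)
    (r : ℕ) (hr : r ≤ m) (t s : ℂ) :
    (charAB (tD t * X * sD s)).coeff r
      = t ^ ((m+1)*(m+4)/2 - r) * s ^ ((m+1)*(m+4)/2 - r) * (charAB X).coeff r := by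
  have hW : r < (m+1)*(m+4)/2 := by
    have : (m+1)*(m+4) = m*m + 5*m + 4 := by ring
    omega
  by_cases h0 : t * s = 0
  · have hX : tD t * X * sD s = 0 := by
      ext i j
      simp only [tD, sD, Matrix.mul_diagonal, Matrix.diagonal_mul, Matrix.zero_apply]
      have hi := i.isLt
      rcases mul_eq_zero.mp h0 with h | h
      · rw [h, zero_pow (by omega)]
        simp
      · rw [h, zero_pow (by omega)]
        simp
    rw [hX, charAB_zero, ← mul_pow, h0, zero_pow (by omega)]
    simp
  · have ht : t ≠ 0 := left_ne_zero_of_mul h0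
    have h := congrArg (fun p => Polynomial.coeff p r) (charAB_comp X t s)
    simp only [Polynomial.coeff_C_mul, Polynomial.comp_C_mul_X_coeff] at h
    obtain ⟨k, hk⟩ := Nat.exists_eq_add_of_lt hW
    have e : (m+1)*(m+4)/2 - r = k + 1 := by omega
    have e2 : (m+1)*(m+4)/2 = r + (k + 1) := by omega
    rw [e2] at h
    rw [e]
    apply mul_left_cancel₀ (mul_ne_zero ht (pow_ne_zero r h0))
    rw [mul_pow] at h ⊢
    linear_combination h

end
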